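/- (Counterexamples to Kippenhahn's conjecture in all even sizes ≥ 8.) For every n ≥ 4 there exist real symmetric matrices H, K : Matrix (Fin (2*n)) (Fin (2*n)) ℝ (Hᵀ = H and Kᵀ = K) such that: (a) for all x, y : ℝ there exists a monic polynomial g ∈ Polynomial ℝ with (x • H + y • K).charpoly = g ^ 2 (so every eigenvalue of every real linear combination x H + y K has even multiplicity); and yet (b) the complexifications H' := H.map (algebraMap ℝ ℂ) and K' := K.map (algebraMap ℝ ℂ) generate the full matrix algebra: Algebra.adjoin ℂ {H', K'} = ⊤ in Matrix (Fin (2*n)) (Fin (2*n)) ℂ. -/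

import Mathlib

open Matrix

/-!
Take `H = [[A, 0], [0, A]]` and `K = [[0, Bᵀ], [B, 0]]` with `A = [[0, Gᵀ], [G, S]]` and
`B = [[0, (G J)ᵀ], [G J, W]]`, where `S` is symmetric, `W` and `J` are skew-symmetric and
`J ^ 2 = -1`. For `(x, y) = s (cos θ, sin θ)`, rotating the coordinates on which `J` acts by `θ`
carries `x H + y K` to the realification of a Hermitian matrix, whose characteristic polynomial is
the square of a real one. The rotation depends on `(x, y)`, so nothing forces a common block
structure on the pair.

If `A` has a simple eigenvalue with eigenvector `v`, the algebra generated by `H` and `K` contains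
`P = v vᵀ ⊕ v vᵀ`. Compressing `K H K` by `P` gives `a v vᵀ ⊕ b v vᵀ`, so as soon as `a ≠ b` the
algebra contains the rank-one projection onto `(v, 0)` and it suffices that this vector is cyclic.
In the example `B` moves along a path, which makes `v` cyclic whatever the size.
-/

section CommSemiring

variable {R ι : Type*} [CommSemiring R] [Fintype ι]

lemma vecMulVec_self_mul_mul_vecMulVec_self (v : ι → R) (M : Matrix ι ι R) :
    vecMulVec v v * M * vecMulVec v v = (v ⬝ᵥ M *ᵥ v) • vecMulVec v v := by
  rw [vecMulVec_mul, vecMulVec_mul_vecMulVec, dotProduct_mulVec, vecMulVec_smul]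

variable [DecidableEq ι]

lemma aeval_isSymm {A : Matrix ι ι R} (hA : A.IsSymm) (p : Polynomial R) :
    (Polynomial.aeval A p).IsSymm := by
  induction p using Polynomial.induction_on' with
  | add p q hp hq => rw [map_add]; exact hp.add hq
  | monomial n a =>
    rw [Polynomial.aeval_monomial, ← Algebra.smul_def]
    exact (hA.pow n).smul a

lemma adjoin_eq_top_of_vecMulVec_self_mem_of_cyclic {S : Set (Matrix ι ι R)} {v : ι → R}
    (hS : ∀ M ∈ S, M.IsSymm) (hv : vecMulVec v v ∈ Algebra.adjoin R S)
    (hcyclic : ∀ U : Submodule R (ι → R), v ∈ U → (∀ M ∈ S, ∀ u ∈ U, M *ᵥ u ∈ U) → U = ⊤) :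
    Algebra.adjoin R S = ⊤ := by
  set 𝒜 := Algebra.adjoin R S
  let left (w : ι → R) : Submodule R (ι → R) :=
    𝒜.toSubmodule.comap ((vecMulVecBilin R R).flip w)
  let right (u : ι → R) : Submodule R (ι → R) :=
    𝒜.toSubmodule.comap (vecMulVecBilin R R u)
  have hright : right v = ⊤ := by
    refine hcyclic _ hv fun M hM w hw ↦ ?_
    have h := 𝒜.mul_mem hw (Algebra.subset_adjoin hM)
    simpa [right, vecMulVec_mul, ← mulVec_transpose, (hS M hM).eq] using h
  have hleft (w : ι → R) : left w = ⊤ := by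
    refine hcyclic _ (hright.ge trivial : w ∈ right v) fun M hM u hu ↦ ?_
    have h := 𝒜.mul_mem (Algebra.subset_adjoin hM) hu
    simpa [left, mul_vecMulVec] using h
  refine eq_top_iff.mpr fun M _ ↦ ?_
  rw [matrix_eq_sum_single M]
  refine 𝒜.sum_mem fun i _ ↦ 𝒜.sum_mem fun j _ ↦ ?_
  have hunit : single i j (1 : R) ∈ 𝒜 := by
    rw [single_eq_single_vecMulVec_single]
    exact (hleft _).ge trivial
  simpa using 𝒜.smul_mem hunit (M i j)

end CommSemiring

section Generation

variable {F ι : Type*} [Field F] [Fintype ι] {v : ι → F}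

lemma exists_eq_smul_vecMulVec_self {P : Matrix ι ι F} (hP : P.IsSymm)
    (hrange : ∀ x, ∃ c : F, P *ᵥ x = c • v) : ∃ γ : F, P = γ • vecMulVec v v := by
  classical
  choose c hc using fun j ↦ hrange (Pi.single j 1)
  have hentry (i j : ι) : P i j = c j * v i := by
    simpa using congrFun (hc j) i
  by_cases hv : v = 0
  · exact ⟨0, by ext i j; simp [hentry, hv]⟩
  obtain ⟨i₀, hi₀⟩ := Function.ne_iff.mp hv
  refine ⟨c i₀ / v i₀, ?_⟩
  ext i j
  have hswap : c i₀ * v j = c j * v i₀ := by rw [← hentry, ← hentry, hP.apply]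
  rw [hentry, Matrix.smul_apply, vecMulVec_apply, smul_eq_mul]
  rw [Pi.zero_apply] at hi₀
  field_simp
  linear_combination -v i * hswap

lemma vecMulVec_self_mem_adjoin_of_simple_eigenvalue [DecidableEq ι] {A : Matrix ι ι F}
    (hA : A.IsSymm) {μ : F} (hv : A *ᵥ v = μ • v)
    (hsimple : ∀ x, A *ᵥ x = μ • x → ∃ c : F, x = c • v) :
    vecMulVec v v ∈ Algebra.adjoin F {A} := by
  by_cases hv₀ : v = 0
  · simp [hv₀]
  have hroot : (minpoly F A).IsRoot μ := by
    rw [← Matrix.minpoly_toLin']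
    exact Module.End.isRoot_of_hasEigenvalue
      (Module.End.hasEigenvalue_of_hasEigenvector (x := v)
        ⟨Module.End.mem_eigenspace_iff.mpr (by simpa using hv), hv₀⟩)
  obtain ⟨q, hq⟩ := Polynomial.dvd_iff_isRoot.mpr hroot
  have hqA : Polynomial.aeval A q ≠ 0 := by
    have hint : IsIntegral F A := Matrix.isIntegral A
    have hmonic : q.Monic :=
      (Polynomial.monic_X_sub_C μ).of_mul_monic_left (hq ▸ minpoly.monic hint)
    exact minpoly.aeval_ne_zero_of_dvdNotUnit_minpoly hint hmonic
      ⟨hmonic.ne_zero, _, Polynomial.not_isUnit_X_sub_C μ, hq.trans (mul_comm _ _)⟩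
  have hrange (x : ι → F) : ∃ c : F, Polynomial.aeval A q *ᵥ x = c • v := by
    apply hsimple
    have h := congrArg (· *ᵥ x) (minpoly.aeval F A)
    rw [hq] at h
    simpa [sub_mulVec, ← mulVec_mulVec, sub_eq_zero, Algebra.algebraMap_eq_smul_one,
      smul_mulVec] using h
  obtain ⟨γ, hγ⟩ := exists_eq_smul_vecMulVec_self (aeval_isSymm hA q) hrange
  have hγ₀ : γ ≠ 0 := by
    rintro rfl
    exact hqA (by rw [hγ, zero_smul])
  rw [show vecMulVec v v = γ⁻¹ • Polynomial.aeval A q by rw [hγ, inv_smul_smul₀ hγ₀]]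
  exact Subalgebra.smul_mem _ (Polynomial.aeval_mem_adjoin_singleton F A) _

end Generation

lemma adjoin_image_eq_top_of_surjective {R A B : Type*} [CommSemiring R] [Semiring A]
    [Semiring B] [Algebra R A] [Algebra R B] (φ : A →ₐ[R] B) (hφ : Function.Surjective φ)
    {S : Set A} (hS : Algebra.adjoin R S = ⊤) : Algebra.adjoin R (φ '' S) = ⊤ := by
  rw [← φ.map_adjoin, hS, Algebra.map_top, φ.range_eq_top.mpr hφ]

lemma adjoin_image_map_eq_top {K L ι : Type*} [CommSemiring K] [CommSemiring L] [Algebra K L]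
    [Fintype ι] [DecidableEq ι] {S : Set (Matrix ι ι K)} (hS : Algebra.adjoin K S = ⊤) :
    Algebra.adjoin L ((fun M ↦ M.map (algebraMap K L)) '' S) = ⊤ := by
  set 𝒜 := Algebra.adjoin L ((fun M ↦ M.map (algebraMap K L)) '' S)
  have hmap : Algebra.adjoin K S ≤ (𝒜.restrictScalars K).comap (Algebra.ofId K L).mapMatrix :=
    Algebra.adjoin_le fun M hM ↦ Algebra.subset_adjoin ⟨M, hM, rfl⟩
  refine eq_top_iff.mpr fun M _ ↦ ?_
  rw [matrix_eq_sum_single M]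
  refine 𝒜.sum_mem fun i _ ↦ 𝒜.sum_mem fun j _ ↦ ?_
  have hunit : single i j (1 : L) ∈ 𝒜 := by
    simpa using hmap (hS.ge trivial : single i j (1 : K) ∈ _)
  simpa using 𝒜.smul_mem hunit (M i j)

section Charpoly

variable {R ι : Type*} [CommRing R] [Fintype ι] [DecidableEq ι]

lemma charpoly_eq_of_intertwines {S T M N : Matrix ι ι R} (hTS : T * S = 1)
    (h : T * M = N * T) : M.charpoly = N.charpoly := by
  calc M.charpoly = (S * (T * M)).charpoly := by
        rw [← Matrix.mul_assoc, mul_eq_one_comm.mp hTS, Matrix.one_mul]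
    _ = (T * M * S).charpoly := charpoly_mul_comm S (T * M)
    _ = N.charpoly := by rw [h, Matrix.mul_assoc, hTS, Matrix.mul_one]

lemma charpoly_fromBlocks_neg_self {i : R} (hi : i * i = -1) (P Q : Matrix ι ι R) :
    (fromBlocks P (-Q) Q P).charpoly = (P + i • Q).charpoly * (P - i • Q).charpoly := by
  let I : Matrix ι ι R := 1
  have hinv : fromBlocks I 0 (i • I) I * fromBlocks I 0 (-(i • I)) I = 1 := by
    simp [I, fromBlocks_multiply, fromBlocks_one]
  rw [← charpoly_fromBlocks_zero₂₁ _ (-Q)]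
  refine charpoly_eq_of_intertwines hinv ?_
  simp only [fromBlocks_multiply]
  congr 1 <;> simp [I, smul_smul, hi, sub_eq_add_neg, add_comm]

open Polynomial in
lemma exists_monic_map_eq_charpoly {Z : Matrix ι ι ℂ} (hZ : Z.IsHermitian) :
    ∃ g : ℝ[X], g.Monic ∧ g.map (algebraMap ℝ ℂ) = Z.charpoly :=
  ⟨∏ j, (X - C (hZ.eigenvalues j)), monic_prod_X_sub_C _ _, by
    rw [hZ.charpoly_eq]; simp [Polynomial.map_prod]⟩

lemma exists_monic_charpoly_fromBlocks_neg_self_eq_sq {P Q : Matrix ι ι ℝ} (hP : P.IsSymm)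
    (hQ : Qᵀ = -Q) :
    ∃ g : Polynomial ℝ, g.Monic ∧ (fromBlocks P (-Q) Q P).charpoly = g ^ 2 := by
  let P' := P.map (algebraMap ℝ ℂ)
  let Q' := Q.map (algebraMap ℝ ℂ)
  have hP' : P'ᵀ = P' := hP.map _
  have hQ' : Q'ᵀ = -Q' := by ext i j; simp [Q', show Q j i = -Q i j from congrFun₂ hQ i j]
  have htranspose : (P' + Complex.I • Q')ᵀ = P' - Complex.I • Q' := by
    rw [transpose_add, transpose_smul, hP', hQ', smul_neg, sub_eq_add_neg]
  have hherm : (P' + Complex.I • Q').IsHermitian := by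
    rw [IsHermitian, conjTranspose, htranspose]
    ext i j
    simp [P', Q']
  obtain ⟨g, hg, hgZ⟩ := exists_monic_map_eq_charpoly hherm
  refine ⟨g, hg, Polynomial.map_injective _ (algebraMap ℝ ℂ).injective ?_⟩
  have hneg : (-Q).map (algebraMap ℝ ℂ) = -Q' := by ext i j; simp [Q']
  rw [← charpoly_map, fromBlocks_map, hneg, charpoly_fromBlocks_neg_self Complex.I_mul_I,
    ← htranspose, charpoly_transpose, Polynomial.map_pow, hgZ, sq]

end Charpoly

section Doubling

variable {V F : Type*}

/-- The block matrix `A ⊕ A`, the shape of the first matrix of the counterexamples. -/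
def diagDouble [Zero F] (A : Matrix V V F) : Matrix (V ⊕ V) (V ⊕ V) F := fromBlocks A 0 0 A

/-- The symmetric block matrix with zero diagonal blocks and lower left block `B`, the shape of the
second matrix of the counterexamples. -/
def antidiagDouble [Zero F] (B : Matrix V V F) : Matrix (V ⊕ V) (V ⊕ V) F := fromBlocks 0 Bᵀ B 0

lemma diagDouble_isSymm [Zero F] {A : Matrix V V F} (hA : A.IsSymm) : (diagDouble A).IsSymm :=
  hA.fromBlocks transpose_zero hA

lemma antidiagDouble_isSymm [Zero F] (B : Matrix V V F) : (antidiagDouble B).IsSymm :=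
  isSymm_zero.fromBlocks (transpose_transpose B) isSymm_zero

variable [Fintype V] [DecidableEq V]

lemma diagDouble_mem_adjoin [CommSemiring F] {A M : Matrix V V F} (hM : M ∈ Algebra.adjoin F {A}) :
    diagDouble M ∈ Algebra.adjoin F {diagDouble A} := by
  induction hM using Algebra.adjoin_induction with
  | mem M hM => exact Algebra.subset_adjoin (by rw [Set.mem_singleton_iff.mp hM]; rfl)
  | algebraMap c =>
    convert Subalgebra.algebraMap_mem _ c
    simp [diagDouble, Algebra.algebraMap_eq_smul_one, ← fromBlocks_one, fromBlocks_smul]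
  | add M N _ _ hM hN => simpa [diagDouble, fromBlocks_add] using add_mem hM hN
  | mul M N _ _ hM hN => simpa [diagDouble, fromBlocks_multiply] using mul_mem hM hN

variable [Field F]

lemma vecMulVec_elim_zero_mem_adjoin {A B : Matrix V V F} {v : V → F}
    (hv : vecMulVec v v ∈ Algebra.adjoin F {A})
    (hne : v ⬝ᵥ (Bᵀ * A * B) *ᵥ v ≠ v ⬝ᵥ (B * A * Bᵀ) *ᵥ v) :
    vecMulVec (Sum.elim v 0) (Sum.elim v 0) ∈
      Algebra.adjoin F {diagDouble A, antidiagDouble B} := by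
  set 𝒜 := Algebra.adjoin F {diagDouble A, antidiagDouble B}
  set H := diagDouble A
  set K := antidiagDouble B
  set P := diagDouble (vecMulVec v v)
  set a := v ⬝ᵥ (Bᵀ * A * B) *ᵥ v
  set b := v ⬝ᵥ (B * A * Bᵀ) *ᵥ v
  have hH : H ∈ 𝒜 := Algebra.subset_adjoin (.inl rfl)
  have hK : K ∈ 𝒜 := Algebra.subset_adjoin (.inr rfl)
  have hP : P ∈ 𝒜 := Algebra.adjoin_mono (by simp) (diagDouble_mem_adjoin hv)
  have hcompress :
      P * (K * H * K) * P = fromBlocks (a • vecMulVec v v) 0 0 (b • vecMulVec v v) := by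
    simp only [P, K, H, diagDouble, antidiagDouble, fromBlocks_multiply, Matrix.zero_mul,
      Matrix.mul_zero, add_zero, zero_add, vecMulVec_self_mul_mul_vecMulVec_self, a, b]
  have hsplit : vecMulVec (Sum.elim v 0) (Sum.elim v 0) =
      (a - b)⁻¹ • (P * (K * H * K) * P - b • P) := by
    rw [hcompress, eq_inv_smul_iff₀ (sub_ne_zero.mpr hne)]
    ext (i | i) (j | j) <;> simp [P, diagDouble, vecMulVec_apply, sub_mul]
  rw [hsplit]
  exact 𝒜.smul_mem (𝒜.sub_mem (𝒜.mul_mem (𝒜.mul_mem hP (𝒜.mul_mem (𝒜.mul_mem hK hH) hK)) hP)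
    (𝒜.smul_mem hP b)) _

theorem adjoin_diagDouble_antidiagDouble_eq_top {A B : Matrix V V F} (hA : A.IsSymm) {v : V → F}
    (hv : vecMulVec v v ∈ Algebra.adjoin F {A})
    (hne : v ⬝ᵥ (Bᵀ * A * B) *ᵥ v ≠ v ⬝ᵥ (B * A * Bᵀ) *ᵥ v)
    (hcyclic : ∀ U₁ U₂ : Submodule F (V → F), v ∈ U₁ →
      (∀ u ∈ U₁, A *ᵥ u ∈ U₁) → (∀ u ∈ U₂, A *ᵥ u ∈ U₂) →
      (∀ u ∈ U₁, B *ᵥ u ∈ U₂) → (∀ u ∈ U₂, Bᵀ *ᵥ u ∈ U₁) → U₁ = ⊤ ∧ U₂ = ⊤) :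
    Algebra.adjoin F {diagDouble A, antidiagDouble B} = ⊤ := by
  refine adjoin_eq_top_of_vecMulVec_self_mem_of_cyclic ?_ (vecMulVec_elim_zero_mem_adjoin hv hne)
    fun U hvU hU ↦ ?_
  · rintro M (rfl | rfl)
    exacts [diagDouble_isSymm hA, antidiagDouble_isSymm B]
  have hH (a b : V → F) (h : Sum.elim a b ∈ U) : Sum.elim (A *ᵥ a) (A *ᵥ b) ∈ U := by
    simpa [diagDouble, fromBlocks_mulVec] using hU _ (.inl rfl) _ h
  have hK (a b : V → F) (h : Sum.elim a b ∈ U) : Sum.elim (Bᵀ *ᵥ b) (B *ᵥ a) ∈ U := by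
    simpa [antidiagDouble, fromBlocks_mulVec] using hU _ (.inr rfl) _ h
  let e := (LinearEquiv.sumArrowLequivProdArrow V V F F).symm
  let U₁ := U.comap (e.toLinearMap ∘ₗ LinearMap.inl F (V → F) (V → F))
  let U₂ := U.comap (e.toLinearMap ∘ₗ LinearMap.inr F (V → F) (V → F))
  obtain ⟨hU₁, hU₂⟩ : U₁ = ⊤ ∧ U₂ = ⊤ := by
    refine hcyclic U₁ U₂ hvU (fun u hu ↦ ?_) (fun u hu ↦ ?_) (fun u hu ↦ ?_) fun u hu ↦ ?_
    · change Sum.elim (A *ᵥ u) 0 ∈ U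
      simpa only [mulVec_zero] using hH u 0 hu
    · change Sum.elim (0 : V → F) (A *ᵥ u) ∈ U
      simpa only [mulVec_zero] using hH 0 u hu
    · change Sum.elim (0 : V → F) (B *ᵥ u) ∈ U
      simpa only [mulVec_zero] using hK u 0 hu
    · change Sum.elim (Bᵀ *ᵥ u) 0 ∈ U
      simpa only [mulVec_zero] using hK 0 u hu
  refine eq_top_iff.mpr fun w _ ↦ ?_
  have hsum : w = e (w ∘ Sum.inl, 0) + e (0, w ∘ Sum.inr) := by
    ext (i | i) <;> simp [e]
  rw [hsum]
  exact U.add_mem (hU₁.ge trivial : w ∘ Sum.inl ∈ U₁) (hU₂.ge trivial : w ∘ Sum.inr ∈ U₂)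

end Doubling

section Bordered

variable {R m r : Type*}

/-- The matrix `S` bordered by the columns of `G` and their transposes, with a zero corner; the
bordering coordinates come first. -/
def bordered [Zero R] (G : Matrix m r R) (S : Matrix m m R) : Matrix (r ⊕ m) (r ⊕ m) R :=
  fromBlocks 0 Gᵀ G S

lemma transpose_bordered [Zero R] (G : Matrix m r R) (S : Matrix m m R) :
    (bordered G S)ᵀ = bordered G Sᵀ := by
  simp [bordered, fromBlocks_transpose]

lemma bordered_isSymm [Zero R] (G : Matrix m r R) {S : Matrix m m R} (hS : S.IsSymm) :
    (bordered G S).IsSymm := by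
  rw [IsSymm, transpose_bordered, hS.eq]

variable [Fintype m] [DecidableEq m] [Fintype r] [DecidableEq r]

/-- The rotation of the `r`-coordinates of `(r ⊕ m) ⊕ (r ⊕ m)` with cosine `c` and sine `d`, taken
with respect to the complex structure `(p, q) ↦ (J q, J p)`; it fixes the `m`-coordinates. -/
def blockRotation [CommRing R] (m : Type*) [DecidableEq m] (J : Matrix r r R) (c d : R) :
    Matrix ((r ⊕ m) ⊕ (r ⊕ m)) ((r ⊕ m) ⊕ (r ⊕ m)) R :=
  fromBlocks (fromBlocks (c • 1) 0 0 1) (fromBlocks (d • J) 0 0 0)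
    (fromBlocks (d • J) 0 0 0) (fromBlocks (c • 1) 0 0 1)

variable [CommRing R] {J : Matrix r r R} {c d : R}

lemma blockRotation_mul_blockRotation_neg (hJJ : J * J = -1) (hcd : c * c + d * d = 1) :
    blockRotation m J c d * blockRotation m J c (-d) = 1 := by
  have hdc : d * d + c * c = 1 := by rw [add_comm, hcd]
  simp [blockRotation, fromBlocks_multiply, fromBlocks_add, smul_smul, hJJ, ← add_smul, hcd, hdc,
    mul_comm]

lemma blockRotation_mul_eq_mul_blockRotation (hJ : Jᵀ = -J) (hJJ : J * J = -1)
    (hcd : c * c + d * d = 1) (G : Matrix m r R) (S : Matrix m m R) {W : Matrix m m R}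
    (hW : Wᵀ = -W) (s : R) :
    blockRotation m J c d *
        ((s * c) • diagDouble (bordered G S) + (s * d) • antidiagDouble (bordered (G * J) W)) =
      fromBlocks (bordered (s • G) ((s * c) • S)) (-fromBlocks 0 0 0 ((s * d) • W))
        (fromBlocks 0 0 0 ((s * d) • W)) (bordered (s • G) ((s * c) • S)) *
      blockRotation m J c d := by
  have hJJG : J * (J * Gᵀ) = -Gᵀ := by rw [← Matrix.mul_assoc, hJJ, Matrix.neg_mul, Matrix.one_mul]
  have hs : s * c * c + s * d * d = s := by linear_combination s * hcd
  have hs' : s * d * d + s * c * c = s := by linear_combination s * hcd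
  simp [blockRotation, diagDouble, antidiagDouble, bordered, fromBlocks_transpose,
    fromBlocks_multiply, fromBlocks_add, fromBlocks_smul, fromBlocks_neg, smul_smul, hJ, hW, hJJG,
    ← add_smul, hs, hs', mul_comm c s, mul_comm d s, mul_right_comm s c d]

end Bordered

theorem exists_monic_charpoly_smul_add_smul_eq_sq {m r : Type*} [Fintype m] [DecidableEq m]
    [Fintype r] [DecidableEq r] {J : Matrix r r ℝ} (hJ : Jᵀ = -J) (hJJ : J * J = -1)
    (G : Matrix m r ℝ) {S W : Matrix m m ℝ} (hS : S.IsSymm) (hW : Wᵀ = -W) (x y : ℝ) :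
    ∃ g : Polynomial ℝ, g.Monic ∧
      (x • diagDouble (bordered G S) + y • antidiagDouble (bordered (G * J) W)).charpoly =
        g ^ 2 := by
  let z : ℂ := ⟨x, y⟩
  have hx : ‖z‖ * Real.cos z.arg = x := Complex.norm_mul_cos_arg z
  have hy : ‖z‖ * Real.sin z.arg = y := Complex.norm_mul_sin_arg z
  have hcd : Real.cos z.arg * Real.cos z.arg + Real.sin z.arg * Real.sin z.arg = 1 := by
    rw [← sq, ← sq, Real.cos_sq_add_sin_sq]
  have hrotate := charpoly_eq_of_intertwines (blockRotation_mul_blockRotation_neg hJJ hcd)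
    (blockRotation_mul_eq_mul_blockRotation hJ hJJ hcd G S hW ‖z‖)
  rw [hx, hy] at hrotate
  rw [hrotate]
  refine exists_monic_charpoly_fromBlocks_neg_self_eq_sq (bordered_isSymm _ (hS.smul x)) ?_
  simp [fromBlocks_transpose, fromBlocks_neg, hW]

namespace KippenhahnExample

variable (k : ℕ)

/-- The border `G` of both blocks: `diag(1, 2)` in the first two rows, zero below. -/
def coupling : Matrix (Fin (k + 2)) (Fin 2) ℝ :=
  of fun i j ↦ if (i : ℕ) = j then (j : ℝ) + 1 else 0

/-- The complex structure `J` of the plane. -/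
def quarterTurn : Matrix (Fin 2) (Fin 2) ℝ := !![0, 1; -1, 0]

/-- The symmetric matrix `S`: the block `[[2, 1], [1, 2]]` in the first two
coordinates, extended by zero. -/
def corner : Matrix (Fin (k + 2)) (Fin (k + 2)) ℝ :=
  of fun i j ↦ if (i : ℕ) < 2 ∧ (j : ℕ) < 2 then if (i : ℕ) = j then 2 else 1 else 0

/-- The matrix `W`: the skew-symmetric adjacency matrix of the oriented path `0 → 1 → ⋯ → k + 1`. -/
def path : Matrix (Fin (k + 2)) (Fin (k + 2)) ℝ :=
  of fun i j ↦ if (i : ℕ) = j + 1 then 1 else if (j : ℕ) = i + 1 then -1 else 0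

/-- The block `A` of the example. -/
noncomputable def diagBlock : Matrix (Fin 2 ⊕ Fin (k + 2)) (Fin 2 ⊕ Fin (k + 2)) ℝ :=
  bordered (coupling k) (corner k)

/-- The block `B` of the example is the case `s = 1`, and its transpose the case `s = -1`. -/
noncomputable def offBlock (s : ℝ) : Matrix (Fin 2 ⊕ Fin (k + 2)) (Fin 2 ⊕ Fin (k + 2)) ℝ :=
  bordered (coupling k * quarterTurn) (s • path k)

lemma transpose_quarterTurn : quarterTurnᵀ = -quarterTurn := by
  ext i j; fin_cases i <;> fin_cases j <;> simp [quarterTurn]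

lemma quarterTurn_mul_self : quarterTurn * quarterTurn = -1 := by
  ext i j; fin_cases i <;> fin_cases j <;> simp [quarterTurn]

lemma corner_isSymm : (corner k).IsSymm := by
  ext i j; simp only [corner, transpose_apply, of_apply, and_comm, eq_comm]

lemma transpose_smul_path (s : ℝ) : (s • path k)ᵀ = -(s • path k) := by
  ext i j
  simp only [path, transpose_apply, Matrix.smul_apply, Matrix.neg_apply, of_apply]
  split_ifs <;> first | omega | simp

lemma diagBlock_isSymm : (diagBlock k).IsSymm := bordered_isSymm _ (corner_isSymm k)

lemma transpose_offBlock (s : ℝ) : (offBlock k s)ᵀ = offBlock k (-s) := by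
  rw [offBlock, transpose_bordered, transpose_smul_path, offBlock, neg_smul]

/-- The basis vectors of the first summand. -/
def headVec (i : Fin 2) : Fin 2 ⊕ Fin (k + 2) → ℝ := Pi.single (.inl i) 1

/-- The basis vectors of the second summand, continued by zero for `k + 2 ≤ j`. -/
def tailVec (j : ℕ) : Fin 2 ⊕ Fin (k + 2) → ℝ := Sum.elim 0 fun i ↦ if (i : ℕ) = j then 1 else 0

variable {k}

lemma tailVec_eq_single {j : ℕ} (hj : j < k + 2) :
    tailVec k j = Pi.single (.inr ⟨j, hj⟩) 1 := by
  ext (i | i) <;> simp [tailVec, Pi.single_apply, Fin.ext_iff]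

lemma mulVec_tailVec {n : Type*} (M : Matrix n (Fin 2 ⊕ Fin (k + 2)) ℝ) {j : ℕ}
    (hj : j < k + 2) : M *ᵥ tailVec k j = fun i ↦ M i (.inr ⟨j, hj⟩) := by
  rw [tailVec_eq_single hj, mulVec_single_one]
  rfl

lemma headVec_dotProduct (i : Fin 2) (w : Fin 2 ⊕ Fin (k + 2) → ℝ) :
    headVec k i ⬝ᵥ w = w (.inl i) :=
  single_one_dotProduct _ _

lemma tailVec_dotProduct {j : ℕ} (hj : j < k + 2) (w : Fin 2 ⊕ Fin (k + 2) → ℝ) :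
    tailVec k j ⬝ᵥ w = w (.inr ⟨j, hj⟩) := by
  rw [tailVec_eq_single hj, single_one_dotProduct]

lemma tailVec_eq_zero {j : ℕ} (hj : k + 2 ≤ j) : tailVec k j = 0 := by
  ext (i | i)
  · rfl
  · simp only [tailVec, Sum.elim_inr, Pi.zero_apply]
    exact if_neg (by omega)

lemma diagBlock_mulVec_headVec_zero : diagBlock k *ᵥ headVec k 0 = tailVec k 0 := by
  ext (i | i) <;> simp [diagBlock, bordered, headVec, tailVec, coupling]

lemma diagBlock_mulVec_headVec_one : diagBlock k *ᵥ headVec k 1 = (2 : ℝ) • tailVec k 1 := by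
  ext (i | i) <;> norm_num [diagBlock, bordered, headVec, tailVec, coupling]

lemma diagBlock_mulVec_tailVec_zero :
    diagBlock k *ᵥ tailVec k 0 = headVec k 0 + (2 : ℝ) • tailVec k 0 + tailVec k 1 := by
  rw [mulVec_tailVec _ (by omega : 0 < k + 2)]
  ext (i | i)
  · fin_cases i <;> simp [diagBlock, bordered, headVec, tailVec, coupling]
  · simp only [diagBlock, bordered, headVec, tailVec, corner, fromBlocks_apply₂₂, of_apply,
      Pi.add_apply, Pi.smul_apply, Sum.elim_inr, ne_eq, reduceCtorEq, not_false_eq_true,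
      Pi.single_eq_of_ne, smul_eq_mul]
    split_ifs <;> first | omega | norm_num

lemma diagBlock_mulVec_tailVec_one : diagBlock k *ᵥ tailVec k 1 =
    (2 : ℝ) • headVec k 1 + tailVec k 0 + (2 : ℝ) • tailVec k 1 := by
  rw [mulVec_tailVec _ (by omega : 1 < k + 2)]
  ext (i | i)
  · fin_cases i <;> norm_num [diagBlock, bordered, headVec, tailVec, coupling]
  · simp only [diagBlock, bordered, headVec, tailVec, corner, fromBlocks_apply₂₂, of_apply,
      Pi.add_apply, Pi.smul_apply, Sum.elim_inr, ne_eq, reduceCtorEq, not_false_eq_true,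
      Pi.single_eq_of_ne, smul_eq_mul]
    split_ifs <;> first | omega | norm_num

lemma diagBlock_mulVec_tailVec_add_two (j : ℕ) : diagBlock k *ᵥ tailVec k (j + 2) = 0 := by
  obtain hj | hj := lt_or_ge (j + 2) (k + 2)
  · rw [mulVec_tailVec _ hj]
    ext (i | i)
    · fin_cases i <;> simp [diagBlock, bordered, coupling]
    · simp [diagBlock, bordered, corner]
  · rw [tailVec_eq_zero hj, mulVec_zero]

variable (s : ℝ)

lemma offBlock_mulVec_headVec_zero :
    offBlock k s *ᵥ headVec k 0 = (-2 : ℝ) • tailVec k 1 := by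
  ext (i | i) <;> norm_num [offBlock, bordered, headVec, tailVec, coupling, quarterTurn, mul_apply]

lemma offBlock_mulVec_headVec_one : offBlock k s *ᵥ headVec k 1 = tailVec k 0 := by
  ext (i | i) <;> simp [offBlock, bordered, headVec, tailVec, coupling, quarterTurn, mul_apply]

lemma offBlock_mulVec_tailVec_zero :
    offBlock k s *ᵥ tailVec k 0 = headVec k 1 + s • tailVec k 1 := by
  rw [mulVec_tailVec _ (by omega : 0 < k + 2)]
  ext (i | i)
  · fin_cases i <;> simp [offBlock, bordered, headVec, tailVec, coupling, quarterTurn, mul_apply]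
  · simp [offBlock, bordered, headVec, tailVec, path]

lemma offBlock_mulVec_tailVec_succ {j : ℕ} (hj : j < k + 1) :
    offBlock k s *ᵥ tailVec k (j + 1) =
      (if j = 0 then -2 else 0 : ℝ) • headVec k 0 + s • (tailVec k (j + 2) - tailVec k j) := by
  rw [mulVec_tailVec _ (by omega : j + 1 < k + 2)]
  ext (i | i)
  · fin_cases i <;> split_ifs with hj₀ <;>
      norm_num [offBlock, bordered, headVec, tailVec, coupling, quarterTurn, mul_apply, hj₀]
  · simp only [offBlock, bordered, headVec, tailVec, path, fromBlocks_apply₂₂, of_apply,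
      Matrix.smul_apply, Pi.add_apply, Pi.sub_apply, Pi.smul_apply, Sum.elim_inr, ne_eq,
      reduceCtorEq, not_false_eq_true, Pi.single_eq_of_ne, smul_eq_mul]
    split_ifs <;> first | omega | simp


lemma eq_top_of_headVec_mem_of_tailVec_mem {U : Submodule ℝ (Fin 2 ⊕ Fin (k + 2) → ℝ)}
    (hhead : ∀ i, headVec k i ∈ U) (htail : ∀ j, tailVec k j ∈ U) : U = ⊤ := by
  rw [eq_top_iff, ← (Pi.basisFun ℝ (Fin 2 ⊕ Fin (k + 2))).span_eq, Submodule.span_le]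
  rintro _ ⟨i | j, rfl⟩
  · simpa [headVec] using hhead i
  · rw [Pi.basisFun_apply, ← tailVec_eq_single j.isLt]
    exact htail j

variable (k) in
/-- The eigenvector of `diagBlock k` for the simple eigenvalue `2`. -/
def eigenVec : Fin 2 ⊕ Fin (k + 2) → ℝ :=
  headVec k 0 - headVec k 1 + (2 : ℝ) • tailVec k 0 - tailVec k 1

lemma diagBlock_mulVec_eigenVec : diagBlock k *ᵥ eigenVec k = (2 : ℝ) • eigenVec k := by
  simp only [eigenVec, mulVec_add, mulVec_sub, mulVec_smul, diagBlock_mulVec_headVec_zero,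
    diagBlock_mulVec_headVec_one, diagBlock_mulVec_tailVec_zero, diagBlock_mulVec_tailVec_one]
  module

lemma exists_eq_smul_eigenVec {x : Fin 2 ⊕ Fin (k + 2) → ℝ}
    (hx : diagBlock k *ᵥ x = (2 : ℝ) • x) : ∃ c : ℝ, x = c • eigenVec k := by
  have hdot (w : Fin 2 ⊕ Fin (k + 2) → ℝ) : diagBlock k *ᵥ w ⬝ᵥ x = 2 * (w ⬝ᵥ x) := by
    rw [← smul_eq_mul, ← dotProduct_smul, ← hx, dotProduct_mulVec, ← mulVec_transpose,
      (diagBlock_isSymm k).eq]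
  have hhead₀ := hdot (headVec k 0)
  have hhead₁ := hdot (headVec k 1)
  have htail₀ := hdot (tailVec k 0)
  have htail (j : ℕ) := hdot (tailVec k (j + 2))
  simp only [diagBlock_mulVec_headVec_zero, diagBlock_mulVec_headVec_one,
    diagBlock_mulVec_tailVec_zero, diagBlock_mulVec_tailVec_add_two, add_dotProduct,
    smul_dotProduct, zero_dotProduct, headVec_dotProduct, smul_eq_mul,
    tailVec_dotProduct (by omega : 0 < k + 2), tailVec_dotProduct (by omega : 1 < k + 2),
    Fin.mk_zero, Fin.mk_one] at hhead₀ hhead₁ htail₀ htail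
  refine ⟨x (.inl 0), ?_⟩
  ext (i | ⟨_ | _ | j, hj⟩)
  · fin_cases i
    · simp [eigenVec, headVec, tailVec]
    · suffices x (.inl 1) = -x (.inl 0) by simpa [eigenVec, headVec, tailVec]
      linarith
  · suffices x (.inr 0) = x (.inl 0) * 2 by simpa [eigenVec, headVec, tailVec]
    linarith
  · suffices x (.inr 1) = -x (.inl 0) by simpa [eigenVec, headVec, tailVec]
    linarith
  · have h := htail j
    rw [tailVec_dotProduct hj] at h
    simpa [eigenVec, headVec, tailVec] using h

lemma offBlock_mulVec_eigenVec : offBlock k s *ᵥ eigenVec k =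
    (2 : ℝ) • headVec k 0 + (2 : ℝ) • headVec k 1 + (s - 1) • tailVec k 0 +
      (2 * (s - 1)) • tailVec k 1 - s • tailVec k 2 := by
  have htail := offBlock_mulVec_tailVec_succ (k := k) s k.succ_pos
  rw [zero_add, if_pos rfl] at htail
  simp only [eigenVec, mulVec_add, mulVec_sub, mulVec_smul, offBlock_mulVec_headVec_zero,
    offBlock_mulVec_headVec_one, offBlock_mulVec_tailVec_zero, htail]
  module

lemma diagBlock_mulVec_offBlock_mulVec_eigenVec :
    diagBlock k *ᵥ offBlock k s *ᵥ eigenVec k =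
      (s - 1) • headVec k 0 + (4 * (s - 1)) • headVec k 1 + (4 * s - 2) • tailVec k 0 +
        (5 * s - 1) • tailVec k 1 := by
  simp only [offBlock_mulVec_eigenVec, mulVec_add, mulVec_sub, mulVec_smul,
    diagBlock_mulVec_headVec_zero, diagBlock_mulVec_headVec_one, diagBlock_mulVec_tailVec_zero,
    diagBlock_mulVec_tailVec_one, diagBlock_mulVec_tailVec_add_two 0]
  module

lemma eigenVec_dotProduct_mulVec_eigenVec :
    eigenVec k ⬝ᵥ ((offBlock k s)ᵀ * diagBlock k * offBlock k s) *ᵥ eigenVec k =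
      (s - 1) * (14 * s + 6) := by
  rw [← mulVec_mulVec, ← mulVec_mulVec, dotProduct_mulVec, vecMul_transpose, dotProduct_comm,
    diagBlock_mulVec_offBlock_mulVec_eigenVec, offBlock_mulVec_eigenVec]
  simp only [add_dotProduct, smul_dotProduct, headVec_dotProduct,
    tailVec_dotProduct (by omega : 0 < k + 2), tailVec_dotProduct (by omega : 1 < k + 2)]
  simp [headVec, tailVec]
  ring

section Cyclic

variable {s} {U U₁ U₂ : Submodule ℝ (Fin 2 ⊕ Fin (k + 2) → ℝ)}

lemma headVec_mem_of_tailVec_mem (hU : ∀ u ∈ U, diagBlock k *ᵥ u ∈ U)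
    (h₀ : tailVec k 0 ∈ U) (h₁ : tailVec k 1 ∈ U) : ∀ i, headVec k i ∈ U := by
  have h₀' := hU _ h₀
  have h₁' := hU _ h₁
  rw [diagBlock_mulVec_tailVec_zero] at h₀'
  rw [diagBlock_mulVec_tailVec_one] at h₁'
  refine Fin.forall_fin_two.mpr ⟨?_, ?_⟩
  · convert U.sub_mem h₀' (U.add_mem (U.smul_mem (2 : ℝ) h₀) h₁) using 1
    module
  · convert U.smul_mem (1 / 2 : ℝ) (U.sub_mem h₁' (U.add_mem h₀ (U.smul_mem (2 : ℝ) h₁))) using 1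
    module

lemma tailVec_add_two_mem (hs : s ≠ 0) (hU : ∀ u ∈ U₁, offBlock k s *ᵥ u ∈ U₂) {j : ℕ}
    (hhead : headVec k 0 ∈ U₂) (hj : tailVec k j ∈ U₂) (hj₁ : tailVec k (j + 1) ∈ U₁) :
    tailVec k (j + 2) ∈ U₂ := by
  obtain hlt | hge := lt_or_ge j (k + 1)
  · have h := hU _ hj₁
    rw [offBlock_mulVec_tailVec_succ s hlt, U₂.add_mem_iff_right (U₂.smul_mem _ hhead),
      U₂.smul_mem_iff hs] at h
    simpa using U₂.add_mem h hj
  · rw [tailVec_eq_zero (by omega)]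
    exact U₂.zero_mem

lemma headVec_sub_tailVec_mem_and_headVec_add_headVec_mem (hU : ∀ u ∈ U, diagBlock k *ᵥ u ∈ U)
    (hw : tailVec k 0 + (2 : ℝ) • tailVec k 1 ∈ U) :
    headVec k 1 - tailVec k 1 ∈ U ∧ headVec k 0 + headVec k 1 ∈ U := by
  set w := tailVec k 0 + (2 : ℝ) • tailVec k 1 with hw_def
  have hAw : diagBlock k *ᵥ w - (4 : ℝ) • w =
      headVec k 0 + (4 : ℝ) • headVec k 1 - (3 : ℝ) • tailVec k 1 := by
    simp only [hw_def, mulVec_add, mulVec_smul, diagBlock_mulVec_tailVec_zero,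
      diagBlock_mulVec_tailVec_one]
    module
  have hAw_mem := hAw ▸ U.sub_mem (hU w hw) (U.smul_mem 4 hw)
  have hsub : headVec k 1 - tailVec k 1 ∈ U := by
    convert U.smul_mem (-1 / 6) (U.add_mem (hU _ hAw_mem) (U.smul_mem 2 hw)) using 1
    simp only [hw_def, mulVec_add, mulVec_sub, mulVec_smul, diagBlock_mulVec_headVec_zero,
      diagBlock_mulVec_headVec_one, diagBlock_mulVec_tailVec_one]
    module
  refine ⟨hsub, ?_⟩
  convert U.sub_mem hAw_mem (U.smul_mem 3 hsub) using 1
  module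

lemma tailVec_zero_mem_and_tailVec_one_mem (hU₁ : ∀ u ∈ U₁, diagBlock k *ᵥ u ∈ U₁)
    (hU : ∀ u ∈ U₂, offBlock k (-1) *ᵥ u ∈ U₁) (hsub : headVec k 1 - tailVec k 1 ∈ U₂)
    (hadd : headVec k 0 + headVec k 1 ∈ U₂) : tailVec k 0 ∈ U₁ ∧ tailVec k 1 ∈ U₁ := by
  have h₀ : tailVec k 0 ∈ U₁ := by
    have htail := offBlock_mulVec_tailVec_succ (k := k) (-1) k.succ_pos
    rw [zero_add, if_pos rfl] at htail
    convert U₁.smul_mem (1 / 2 : ℝ) (hU₁ _ (hU _ hsub)) using 1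
    simp only [mulVec_add, mulVec_sub, mulVec_smul, offBlock_mulVec_headVec_one, htail,
      diagBlock_mulVec_headVec_zero, diagBlock_mulVec_tailVec_add_two 0]
    module
  refine ⟨h₀, ?_⟩
  convert U₁.smul_mem (1 / 2 : ℝ) (U₁.sub_mem h₀ (hU _ hadd)) using 1
  simp only [mulVec_add, offBlock_mulVec_headVec_zero, offBlock_mulVec_headVec_one]
  module

lemma eq_top_and_eq_top_of_eigenVec_mem (hv : eigenVec k ∈ U₁)
    (hA₁ : ∀ u ∈ U₁, diagBlock k *ᵥ u ∈ U₁) (hA₂ : ∀ u ∈ U₂, diagBlock k *ᵥ u ∈ U₂)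
    (hB : ∀ u ∈ U₁, offBlock k 1 *ᵥ u ∈ U₂) (hB' : ∀ u ∈ U₂, offBlock k (-1) *ᵥ u ∈ U₁) :
    U₁ = ⊤ ∧ U₂ = ⊤ := by
  have hw : tailVec k 0 + (2 : ℝ) • tailVec k 1 ∈ U₂ := by
    convert U₂.smul_mem (1 / 2 : ℝ) (hA₂ _ (hB _ hv)) using 1
    rw [diagBlock_mulVec_offBlock_mulVec_eigenVec]
    module
  obtain ⟨hsub, hadd⟩ := headVec_sub_tailVec_mem_and_headVec_add_headVec_mem hA₂ hw
  obtain ⟨h₁0, h₁1⟩ := tailVec_zero_mem_and_tailVec_one_mem hA₁ hB' hsub hadd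
  have hhead₁ := headVec_mem_of_tailVec_mem hA₁ h₁0 h₁1
  have h₂0 : tailVec k 0 ∈ U₂ := offBlock_mulVec_headVec_one (k := k) 1 ▸ hB _ (hhead₁ 1)
  have h₂1 : tailVec k 1 ∈ U₂ :=
    (U₂.smul_mem_iff two_ne_zero).mp ((U₂.add_mem_iff_right h₂0).mp hw)
  have hhead₂ := headVec_mem_of_tailVec_mem hA₂ h₂0 h₂1
  have htail (j : ℕ) : tailVec k j ∈ U₁ ∧ tailVec k j ∈ U₂ := by
    induction j using Nat.twoStepInduction with
    | zero => exact ⟨h₁0, h₂0⟩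
    | one => exact ⟨h₁1, h₂1⟩
    | more j hj hj₁ =>
      exact ⟨tailVec_add_two_mem (neg_ne_zero.mpr one_ne_zero) hB' (hhead₁ 0) hj.1 hj₁.2,
        tailVec_add_two_mem one_ne_zero hB (hhead₂ 0) hj.2 hj₁.1⟩
  exact ⟨eq_top_of_headVec_mem_of_tailVec_mem hhead₁ fun j ↦ (htail j).1,
    eq_top_of_headVec_mem_of_tailVec_mem hhead₂ fun j ↦ (htail j).2⟩

end Cyclic

theorem adjoin_diagDouble_diagBlock_antidiagDouble_offBlock_eq_top :
    Algebra.adjoin ℝ {diagDouble (diagBlock k), antidiagDouble (offBlock k 1)} = ⊤ := by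
  refine adjoin_diagDouble_antidiagDouble_eq_top (diagBlock_isSymm k)
    (vecMulVec_self_mem_adjoin_of_simple_eigenvalue (diagBlock_isSymm k) diagBlock_mulVec_eigenVec
      fun _ ↦ exists_eq_smul_eigenVec) ?_ fun U₁ U₂ hv hA₁ hA₂ hB hB' ↦ ?_
  · have h := eigenVec_dotProduct_mulVec_eigenVec (k := k) (-1)
    rw [← transpose_offBlock, transpose_transpose] at h
    rw [eigenVec_dotProduct_mulVec_eigenVec, h]
    norm_num
  · rw [transpose_offBlock] at hB'
    exact eq_top_and_eq_top_of_eigenVec_mem hv hA₁ hA₂ hB hB'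

end KippenhahnExample

/-- **Counterexamples to Kippenhahn's conjecture in all even sizes ≥ 8.**
For every `n ≥ 4` there exist real symmetric `2n × 2n` matrices `H`, `K` such
that every real linear combination `x • H + y • K` has characteristic polynomial
a perfect square of a monic polynomial (so all its eigenvalues have even
multiplicity), and yet the complexifications of `H` and `K` generate the full
matrix algebra `M_{2n}(ℂ)`. -/
theorem kippenhahn_counterexamples_all_even_sizes_ge_eight
    (n : ℕ) (hn : 4 ≤ n) :
    ∃ H K : Matrix (Fin (2 * n)) (Fin (2 * n)) ℝ,
      Hᵀ = H ∧ Kᵀ = K ∧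
      (∀ x y : ℝ, ∃ g : Polynomial ℝ, g.Monic ∧ (x • H + y • K).charpoly = g ^ 2) ∧
      Algebra.adjoin ℂ {H.map (algebraMap ℝ ℂ), K.map (algebraMap ℝ ℂ)} = ⊤ := by
  obtain ⟨k, rfl⟩ := Nat.exists_eq_add_of_le hn
  let e : (Fin 2 ⊕ Fin (k + 2)) ⊕ (Fin 2 ⊕ Fin (k + 2)) ≃ Fin (2 * (4 + k)) :=
    Fintype.equivOfCardEq (by simp; omega)
  let φ := reindexAlgEquiv ℝ ℝ e
  let H := diagDouble (KippenhahnExample.diagBlock k)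
  let K := antidiagDouble (KippenhahnExample.offBlock k 1)
  refine ⟨φ H, φ K, ?_, ?_, fun x y ↦ ?_, ?_⟩
  · exact (diagDouble_isSymm (KippenhahnExample.diagBlock_isSymm k)).reindex e
  · exact (antidiagDouble_isSymm _).reindex e
  · rw [← map_smul, ← map_smul, ← map_add, coe_reindexAlgEquiv, charpoly_reindex]
    exact exists_monic_charpoly_smul_add_smul_eq_sq KippenhahnExample.transpose_quarterTurn
      KippenhahnExample.quarterTurn_mul_self _ (KippenhahnExample.corner_isSymm k)
      (KippenhahnExample.transpose_smul_path k 1) x y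
  · simpa only [Set.image_pair, AlgEquiv.coe_toAlgHom] using adjoin_image_map_eq_top (L := ℂ)
      (adjoin_image_eq_top_of_surjective φ.toAlgHom φ.surjective
        KippenhahnExample.adjoin_diagDouble_diagBlock_antidiagDouble_offBlock_eq_top)
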